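/- Let p : ℝ → ℂⁿ be real analytic on an interval containing [0,δ) with p(0) = 0, p(t) ∈ U for t ∈ [0,δ), and f(p(t)) ≠ 0 for all t ∈ (0,δ). Suppose λ : (0,δ) → ℂ satisfies grad log f(p(t)) = λ(t)•p(t) for all t ∈ (0,δ). Then there is 0 < δ' ≤ δ with λ(t) ≠ 0 for all t ∈ (0,δ'), and λ(t)/|λ(t)| → 1 as t → 0⁺; equivalently the argument of λ(t) tends to 0 as t → 0⁺. -/

import Mathlib

/-!
Write `P` for the holomorphic extension of the curve `p` near `0`, and `F = f ∘ P`. Both are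
holomorphic near `0 ∈ ℂ`, vanish at `0` and are not locally zero, so `P z = z ^ k • q z` and
`F z = z ^ m * g z` with `k, m ≥ 1`, `q 0 ≠ 0`, `g 0 ≠ 0`
(`AnalyticAt.exists_pow_smul_and_deriv`). Composing `f` with the extended curve
(`AnalyticAt.exists_complex_extension`) reduces the analyticity of `F` to the theorem that
holomorphic functions of one variable are analytic.

For small `t > 0` the chain rule and the hypothesis on `grad log f` give
`F' t / F t = conj (λ t) * ⟪P t, P' t⟫`. Multiplying by `t`, the left side tends to `m`, while
`t * ⟪P t, P' t⟫ = ‖P t‖² * b t` with `b t → k`. Hence `λ t * ‖p t‖² → m / k > 0`, and the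
normalisation `λ / ‖λ‖`, which is unchanged by the positive factor `‖p t‖²`, tends to `1`.
-/

/-- `grad log f (x) = grad f(x) / conj (f x)`, where `grad f(x)` is the (conjugate-linear
in the first slot) Hermitian gradient of `f` at `x`, i.e. the unique vector with
`⟪grad f x, v⟫ = Df(x)(v)` for all `v`. -/
noncomputable def gradLog {n : ℕ} (f : EuclideanSpace ℂ (Fin n) → ℂ)
    (x : EuclideanSpace ℂ (Fin n)) : EuclideanSpace ℂ (Fin n) :=
  ((starRingEnd ℂ) (f x))⁻¹ • gradient f x

open Filter Topology

/-- A real analytic curve in a complex Banach space extends to a holomorphic map near the base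
point: its power series has the same coefficients and the same radius over `ℂ`. -/
lemma AnalyticAt.exists_complex_extension {E : Type*} [NormedAddCommGroup E] [NormedSpace ℂ E]
    [CompleteSpace E] {p : ℝ → E} (hp : AnalyticAt ℝ p 0) :
    ∃ P : ℂ → E, AnalyticAt ℂ P 0 ∧ ∀ᶠ t : ℝ in 𝓝 0, P (t : ℂ) = p t := by
  obtain ⟨s, hs⟩ := hp
  let Q : FormalMultilinearSeries ℂ ℂ E := fun n =>
    ContinuousMultilinearMap.mkPiRing ℂ (Fin n) (s.coeff n)
  have hQc : ∀ n, Q.coeff n = s.coeff n := fun n => by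
    rw [FormalMultilinearSeries.coeff]
    simp only [Q, ContinuousMultilinearMap.mkPiRing_apply]
    simp
  have hrad : 0 < Q.radius := by
    obtain ⟨r, hr0, hr⟩ := ENNReal.lt_iff_exists_nnreal_btwn.1 hs.radius_pos
    refine lt_of_lt_of_le hr0 (Q.le_radius_of_summable_norm ?_)
    have h := s.summable_norm_mul_pow hr
    refine h.congr fun n => ?_
    rw [s.norm_apply_eq_norm_coef, Q.norm_apply_eq_norm_coef, hQc]
  have hQ : HasFPowerSeriesAt Q.sum Q 0 := (Q.hasFPowerSeriesOnBall hrad).hasFPowerSeriesAt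
  refine ⟨Q.sum, ⟨Q, hQ⟩, ?_⟩
  have h1 := hasFPowerSeriesAt_iff.1 hs
  have h2 : ∀ᶠ t : ℝ in 𝓝 0, _ :=
    (show Tendsto (fun t : ℝ => (t : ℂ)) (𝓝 0) (𝓝 0) from
      Complex.continuous_ofReal.tendsto' 0 0 (by simp)).eventually (hasFPowerSeriesAt_iff.1 hQ)
  filter_upwards [h1, h2] with t h1 h2
  rw [zero_add] at h1 h2
  refine h2.unique ?_
  convert h1 using 2 with n
  rw [hQc, ← Complex.ofReal_pow]
  exact Complex.coe_smul _ _

/-- Leading term of an analytic map at a zero of finite order, together with the corresponding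
expansion of the Euler derivative `z • g' z`. -/
lemma AnalyticAt.exists_pow_smul_and_deriv {E : Type*} [NormedAddCommGroup E] [NormedSpace ℂ E]
    [CompleteSpace E] {g : ℂ → E} (hg : AnalyticAt ℂ g 0) (hg0 : g 0 = 0)
    (hne : ¬ ∀ᶠ z in 𝓝 0, g z = 0) :
    ∃ (k : ℕ) (q : ℂ → E), 0 < k ∧ AnalyticAt ℂ q 0 ∧ q 0 ≠ 0 ∧
      (∀ᶠ z in 𝓝 0, g z = z ^ k • q z) ∧
      ∀ᶠ z in 𝓝 0, z • deriv g z = z ^ k • ((k : ℂ) • q z + z • deriv q z) := by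
  obtain ⟨k, q, hq, hq0, heq⟩ := hg.exists_eventuallyEq_pow_smul_nonzero_iff.2 hne
  simp only [sub_zero] at heq
  have hk : 0 < k := by
    rcases Nat.eq_zero_or_pos k with rfl | h
    · have := heq.self_of_nhds
      simp [hg0] at this
      exact absurd this.symm hq0
    · exact h
  refine ⟨k, q, hk, hq, hq0, heq, ?_⟩
  filter_upwards [heq.eventually_nhds, hq.eventually_analyticAt] with z hz hqz
  have hd : HasDerivAt (fun w : ℂ => w ^ k • q w) _ z :=
    (hasDerivAt_pow k z).smul hqz.differentiableAt.hasDerivAt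
  rw [EventuallyEq.deriv_eq hz, hd.deriv]
  obtain ⟨j, rfl⟩ := Nat.exists_eq_succ_of_ne_zero hk.ne'
  simp only [Nat.succ_eq_add_one, Nat.add_sub_cancel, smul_add, smul_smul]
  rw [add_comm]
  congr 2 <;> ring

theorem stmt_11 (n : ℕ) (hn : 1 ≤ n)
    (U : Set (EuclideanSpace ℂ (Fin n))) (hU : IsOpen U)
    (h0U : (0 : EuclideanSpace ℂ (Fin n)) ∈ U)
    (f : EuclideanSpace ℂ (Fin n) → ℂ) (hf : DifferentiableOn ℂ f U) (hf0 : f 0 = 0)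
    (p : ℝ → EuclideanSpace ℂ (Fin n)) (δ : ℝ) (hδ : 0 < δ)
    (hp : AnalyticOnNhd ℝ p (Set.Ico 0 δ)) (hp0 : p 0 = 0)
    (hpU : ∀ t ∈ Set.Ico (0 : ℝ) δ, p t ∈ U)
    (hfp : ∀ t ∈ Set.Ioo (0 : ℝ) δ, f (p t) ≠ 0)
    (lam : ℝ → ℂ)
    (hlam : ∀ t ∈ Set.Ioo (0 : ℝ) δ, gradLog f (p t) = lam t • p t) :
    ∃ δ' : ℝ, 0 < δ' ∧ δ' ≤ δ ∧ (∀ t ∈ Set.Ioo (0 : ℝ) δ', lam t ≠ 0) ∧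
      Filter.Tendsto (fun t : ℝ => lam t / (‖lam t‖ : ℂ))
        (nhdsWithin 0 (Set.Ioi 0)) (nhds 1) := by
  obtain ⟨P, hP, hPp⟩ := (hp 0 ⟨le_rfl, hδ⟩).exists_complex_extension
  have hP0 : P 0 = 0 := by simpa [hp0] using hPp.self_of_nhds
  have hPU : ∀ᶠ z in 𝓝 (0 : ℂ), P z ∈ U :=
    hP.continuousAt.eventually_mem (by rw [hP0]; exact hU.mem_nhds h0U)
  have hfd : ∀ x ∈ U, DifferentiableAt ℂ f x := fun x hx =>
    (hf x hx).differentiableAt (hU.mem_nhds hx)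
  set F : ℂ → ℂ := fun z => f (P z) with hF
  have hFa : AnalyticAt ℂ F 0 := by
    rw [Complex.analyticAt_iff_eventually_differentiableAt]
    filter_upwards [hPU, hP.eventually_analyticAt] with z hz hPz
    exact (hfd _ hz).comp z hPz.differentiableAt
  have hι : Tendsto (fun t : ℝ => (t : ℂ)) (𝓝[>] 0) (𝓝 0) :=
    (Complex.continuous_ofReal.tendsto' 0 0 (by simp)).mono_left nhdsWithin_le_nhds
  have hPp' : ∀ᶠ t : ℝ in 𝓝[>] 0, P (t : ℂ) = p t := hPp.filter_mono nhdsWithin_le_nhds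
  have hIoo : ∀ᶠ t : ℝ in 𝓝[>] 0, t ∈ Set.Ioo 0 δ := Ioo_mem_nhdsGT hδ
  have hFne : ¬ ∀ᶠ z in 𝓝 0, F z = 0 := by
    intro h
    obtain ⟨t, h1, h2, h3⟩ := ((hι.eventually h).and (hPp'.and hIoo)).exists
    exact hfp t h3 (by rw [← h2]; exact h1)
  have hPne : ¬ ∀ᶠ z in 𝓝 0, P z = 0 := fun h =>
    hFne (h.mono fun z hz => by simp [hF, hz, hf0])
  obtain ⟨k, q, hk, hq, hq0, hPq, hPd⟩ := hP.exists_pow_smul_and_deriv hP0 hPne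
  obtain ⟨m, g, hm, hg, hg0, hFg, hFd⟩ :=
    hFa.exists_pow_smul_and_deriv (by simp [hF, hP0, hf0]) hFne
  have hqt : Tendsto (fun t : ℝ => q t) (𝓝[>] 0) (𝓝 (q 0)) := hq.continuousAt.tendsto.comp hι
  have hgt : Tendsto (fun t : ℝ => g t) (𝓝[>] 0) (𝓝 (g 0)) := hg.continuousAt.tendsto.comp hι
  have hq't : Tendsto (fun t : ℝ => deriv q t) (𝓝[>] 0) (𝓝 (deriv q 0)) :=
    hq.deriv.continuousAt.tendsto.comp hι
  have hg't : Tendsto (fun t : ℝ => deriv g t) (𝓝[>] 0) (𝓝 (deriv g 0)) :=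
    hg.deriv.continuousAt.tendsto.comp hι
  have ha : Tendsto (fun t : ℝ => ((m : ℂ) * g t + t * deriv g t) / g t) (𝓝[>] 0) (𝓝 (m : ℂ)) := by
    have := ((hgt.const_mul (m : ℂ)).add (hι.mul hg't)).div hgt hg0
    have e : ((m : ℂ) * g 0 + 0 * deriv g 0) / g 0 = m := by
      rw [zero_mul, add_zero, mul_div_cancel_right₀ _ hg0]
    rwa [e] at this
  have hk0 : (k : ℂ) ≠ 0 := by exact_mod_cast hk.ne'
  have hm0 : (m : ℂ) ≠ 0 := by exact_mod_cast hm.ne'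
  have hq0' : ((‖q 0‖ : ℂ) ^ 2) ≠ 0 := by simpa using hq0
  have hb : Tendsto (fun t : ℝ => inner ℂ (q t) ((k : ℂ) • q t + (t : ℂ) • deriv q t)
      / (‖q t‖ : ℂ) ^ 2) (𝓝[>] 0) (𝓝 (k : ℂ)) := by
    have hN : Tendsto (fun t : ℝ => (‖q t‖ : ℂ) ^ 2) (𝓝[>] 0) (𝓝 ((‖q 0‖ : ℂ) ^ 2)) :=
      ((Complex.continuous_ofReal.tendsto _).comp hqt.norm).pow 2
    have := (hqt.inner (𝕜 := ℂ) ((hqt.const_smul (k : ℂ)).add (hι.smul hq't))).div hN hq0'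
    have e : inner ℂ (q 0) ((k : ℂ) • q 0 + (0 : ℂ) • deriv q 0) / (‖q 0‖ : ℂ) ^ 2 = k := by
      rw [zero_smul, add_zero, inner_smul_right, inner_self_eq_norm_sq_to_K]
      exact mul_div_cancel_right₀ _ hq0'
    rwa [e] at this
  -- The numerator is `t * F' t / F t`, the denominator `t * ⟪P t, P' t⟫ / ‖P t‖²`, both with the
  -- powers of `t` cancelled.
  have hkey : ∀ᶠ t : ℝ in 𝓝[>] 0,
      (((m : ℂ) * g t + t * deriv g t) / g t) /
        (inner ℂ (q t) ((k : ℂ) • q t + (t : ℂ) • deriv q t) / (‖q t‖ : ℂ) ^ 2) =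
      (starRingEnd ℂ) (lam t) * (‖p t‖ : ℂ) ^ 2 := by
    filter_upwards [hIoo, hPp', hι.eventually hPU, hι.eventually hP.eventually_analyticAt,
      hι.eventually hPq, hι.eventually hPd, hι.eventually hFg, hι.eventually hFd,
      hb.eventually_ne hk0, hqt.eventually_ne hq0, hgt.eventually_ne hg0]
      with t ht htp htU htA hPq hPd hFg hFd hbne hqne hgne
    have ht0 : (t : ℂ) ≠ 0 := by exact_mod_cast ht.1.ne'
    have hfne : F t ≠ 0 := by simpa [hF, htp] using hfp t ht
    have hchain : deriv F t = fderiv ℂ f (P t) (deriv P t) :=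
      ((hfd _ htU).hasFDerivAt.comp_hasDerivAt _ htA.differentiableAt.hasDerivAt).deriv
    have hlog : (F t)⁻¹ * deriv F t = (starRingEnd ℂ) (lam t) * inner ℂ (P t) (deriv P t) := by
      have h := hlam t ht
      rw [← htp] at h
      rw [← inner_smul_left, ← h, gradLog, inner_smul_left, hchain, gradient,
        InnerProductSpace.toDual_symm_apply]
      simp [hF]
    have hbne' : inner ℂ (q t) ((k : ℂ) • q t + (t : ℂ) • deriv q t) ≠ 0 := fun h =>
      hbne (by rw [h, zero_div])
    have hqn : (‖q t‖ : ℂ) ≠ 0 := by simpa using hqne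
    have hnorm : (‖p t‖ : ℂ) ^ 2 = (t : ℂ) ^ k * (t : ℂ) ^ k * (‖q t‖ : ℂ) ^ 2 := by
      rw [← htp, hPq, norm_smul, norm_pow, Complex.norm_real, Real.norm_of_nonneg ht.1.le]
      push_cast
      ring
    have hin : (t : ℂ) * inner ℂ (P t) (deriv P t) =
        (t : ℂ) ^ k * (t : ℂ) ^ k * inner ℂ (q t) ((k : ℂ) • q t + (t : ℂ) • deriv q t) := by
      rw [← inner_smul_right, hPd, hPq, inner_smul_left, inner_smul_right, map_pow,
        Complex.conj_ofReal, mul_assoc]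
    simp only [smul_eq_mul] at hFg hFd
    have hl : (t : ℂ) * ((F t)⁻¹ * deriv F t) = ((m : ℂ) * g t + t * deriv g t) / g t := by
      rw [mul_left_comm, hFd, hFg]
      field_simp
    rw [← hl, hlog, mul_left_comm, hin, hnorm]
    field_simp
  have hw : Tendsto (fun t : ℝ => lam t * (‖p t‖ : ℂ) ^ 2) (𝓝[>] 0) (𝓝 ((m : ℂ) / k)) := by
    have h1 := (ha.div hb hk0).congr' hkey
    have h2 := (Complex.continuous_conj.tendsto _).comp h1
    simpa [Function.comp_def] using h2
  have hmk : (m : ℂ) / k ≠ 0 := div_ne_zero hm0 hk0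
  have hwne := hw.eventually_ne hmk
  obtain ⟨ε, hε, hεs⟩ := mem_nhdsGT_iff_exists_Ioo_subset.1 hwne
  refine ⟨min ε δ, lt_min hε hδ, min_le_right _ _, fun t ht h => ?_, ?_⟩
  · have : lam t * (‖p t‖ : ℂ) ^ 2 ≠ 0 := hεs ⟨ht.1, ht.2.trans_le (min_le_left _ _)⟩
    exact this (by simp [h])
  · have hn : Tendsto (fun t : ℝ => ((‖lam t * (‖p t‖ : ℂ) ^ 2‖ : ℝ) : ℂ)) (𝓝[>] 0)
        (𝓝 ((‖(m : ℂ) / k‖ : ℝ) : ℂ)) := (Complex.continuous_ofReal.tendsto _).comp hw.norm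
    have h := hw.div hn (by simpa using ⟨hm.ne', hk.ne'⟩)
    have e : (m : ℂ) / k / ((‖(m : ℂ) / k‖ : ℝ) : ℂ) = 1 := by
      have : ((‖(m : ℂ) / k‖ : ℝ) : ℂ) = (m : ℂ) / k := by simp
      rw [this, div_self hmk]
    rw [e] at h
    refine h.congr' ?_
    filter_upwards [hwne] with t ht
    have hpt : (‖p t‖ : ℂ) ^ 2 ≠ 0 := right_ne_zero_of_mul ht
    simp only [Pi.div_apply, norm_mul, norm_pow, Complex.norm_real, norm_norm]
    push_cast
    exact mul_div_mul_right _ _ hpt
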